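/- Every ∼-equivalence class of balanced words contains exactly one reduced word, and this reduced word is the minimal word of the equivalence class with respect to alphabetical order. That is, for every balanced word X there is a unique reduced word Y with Y ∼ X, and this Y satisfies Y ≤ Z for every word Z with Z ∼ X. -/

import Mathlib

/-!
A word is read as a lattice path on `ℤ` starting at `0`, with `R` a step up and `L` a step down.
The proof compares words through the numbers `exits b j w` of times the path leaves height `j`
through the letter `b`.

*Invariance.* Having the same length, the same final height and the same exit numbers is a
congruence on words, and it identifies `FG` with `GF` for balanced `F`, `G`. The algebra map
from `𝒜` to the monoid algebra of the quotient monoid therefore kills `𝒥`, so `∼` implies this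
congruence (`sameData_of_wequiv`).

*Reduced words are determined by their data* (`reduced_unique`). Cancelling the common prefix of
two distinct reduced words with the same data leaves `X = L⋯` and `Y = R⋯`, both of which exit `0`
in both directions. In `Y`, the first exit from `0` downwards comes right after an upper prime, so
reducedness forbids a return to `0` after it; hence `Y` ends below `0` and exits `0` downwards
exactly once. But `X` starts downwards, has to come back to `0` since it also exits upwards, and
ends below `0`, so it exits `0` downwards at least twice.

*Minimality.* A class is finite, so it has a lexicographically least element. That element is
reduced: replacing `UD` by `DU` stays in the class and makes the word smaller, as upper primes
start with `R` and lower primes with `L`. By uniqueness it is the only reduced word of the class.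
-/

/-- A word is a finite sequence of letters; the letter `L` is `false`, the letter `R` is `true`. -/
abbrev Word := List Bool

/-- A word is balanced if it contains equally many `L`s and `R`s. -/
def BalancedWord (w : Word) : Prop := w.count true = w.count false

/-- The element of the free `ℂ`-algebra on two generators corresponding to a word. -/
noncomputable def toA (w : Word) : FreeAlgebra ℂ Bool :=
  (w.map (FreeAlgebra.ι ℂ)).prod

/-- The set `S = {FG - GF : F, G nonempty balanced words}`. -/
def Sset : Set (FreeAlgebra ℂ Bool) :=
  {x | ∃ F G : Word, F ≠ [] ∧ G ≠ [] ∧ BalancedWord F ∧ BalancedWord G ∧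
    x = toA F * toA G - toA G * toA F}

/-- The two-sided ideal `𝒥` generated by `S`. -/
noncomputable def Jideal : TwoSidedIdeal (FreeAlgebra ℂ Bool) := TwoSidedIdeal.span Sset

/-- `X ∼ Y` iff `X - Y ∈ 𝒥`. -/
def WEquiv (X Y : Word) : Prop := toA X - toA Y ∈ Jideal

/-- Words `X` and `Y` are related by a swap of type `(F, G)`. -/
def SwapOfType (F G X Y : Word) : Prop :=
  ∃ W₁ W₂ : Word,
    (X = W₁ ++ F ++ G ++ W₂ ∧ Y = W₁ ++ G ++ F ++ W₂) ∨
    (X = W₁ ++ G ++ F ++ W₂ ∧ Y = W₁ ++ F ++ G ++ W₂)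

/-- Words `X` and `Y` are related by a swap. -/
def RelatedBySwap (X Y : Word) : Prop :=
  ∃ F G : Word, F ≠ [] ∧ G ≠ [] ∧ BalancedWord F ∧ BalancedWord G ∧ SwapOfType F G X Y

/-- The `k`-th elevation of a word: number of `R`s minus number of `L`s among the
first `k` letters. -/
def elev (w : Word) (k : ℕ) : ℤ :=
  ((w.take k).count true : ℤ) - ((w.take k).count false : ℤ)

/-- The elevation multiset `E(W) = {e_k(W) : 0 ≤ k ≤ n}`. -/
def elevMultiset (w : Word) : Multiset ℤ :=
  (Multiset.range (w.length + 1)).map (elev w)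

/-- A word is prime if it is nonempty, balanced, and cannot be written as the
product of two nonempty balanced words. -/
def IsPrimeWord (w : Word) : Prop :=
  w ≠ [] ∧ BalancedWord w ∧
    ¬ ∃ u v : Word, u ≠ [] ∧ v ≠ [] ∧ BalancedWord u ∧ BalancedWord v ∧ w = u ++ v

/-- An upper prime: a prime word with `e_k > 0` for `1 ≤ k ≤ n - 1`. -/
def UpperPrime (w : Word) : Prop :=
  IsPrimeWord w ∧ ∀ k, 1 ≤ k → k ≤ w.length - 1 → 0 < elev w k

/-- A lower prime: a prime word with `e_k < 0` for `1 ≤ k ≤ n - 1`. -/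
def LowerPrime (w : Word) : Prop :=
  IsPrimeWord w ∧ ∀ k, 1 ≤ k → k ≤ w.length - 1 → elev w k < 0

/-- A word is reduced if it contains no contiguous subword `UD` with `U` an
upper prime and `D` a lower prime. -/
def Reduced (W : Word) : Prop :=
  ¬ ∃ U D W₁ W₂ : Word, UpperPrime U ∧ LowerPrime D ∧ W = W₁ ++ U ++ D ++ W₂

/-- Alphabetical (lexicographic) order on words, with `L < R`. -/
def WordLt (X Y : Word) : Prop := List.Lex (· < ·) X Y

/-! ### Heights and exit numbers -/

/-- The step of a letter: `R` goes up by one, `L` goes down by one. -/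
def stp (b : Bool) : ℤ := if b then 1 else -1

/-- The final height of the path of a word started at height `0`. -/
def ht : Word → ℤ
  | [] => 0
  | c :: w => stp c + ht w

/-- The number of times the path of a word, started at height `0`, leaves height `j`
through the letter `b`. -/
def exits (b : Bool) : ℤ → Word → ℕ
  | _, [] => 0
  | j, c :: w => (if c = b ∧ j = 0 then 1 else 0) + exits b (j - stp c) w

lemma ht_append (u v : Word) : ht (u ++ v) = ht u + ht v := by
  induction u with
  | nil => simp [ht]
  | cons c u ih => simp only [List.cons_append, ht, ih]; ring

lemma exits_append (b : Bool) (u v : Word) (j : ℤ) :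
    exits b j (u ++ v) = exits b j u + exits b (j - ht u) v := by
  induction u generalizing j with
  | nil => simp [ht, exits]
  | cons c u ih =>
    simp only [List.cons_append, ht, exits, ih]
    rw [show j - stp c - ht u = j - (stp c + ht u) by ring]; ring

lemma ht_eq_count (w : Word) : ht w = (w.count true : ℤ) - w.count false := by
  induction w with
  | nil => simp [ht]
  | cons c w ih => cases c <;> simp [ht, stp, ih] <;> ring

lemma elev_eq_ht (w : Word) (k : ℕ) : elev w k = ht (w.take k) := by
  rw [ht_eq_count]; rfl

lemma balanced_iff_ht (w : Word) : BalancedWord w ↔ ht w = 0 := by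
  rw [ht_eq_count, BalancedWord]; omega

lemma exists_of_exits_pos (b : Bool) (w : Word) (j : ℤ) (h : 0 < exits b j w) :
    ∃ s t, w = s ++ b :: t ∧ ht s = j := by
  induction w generalizing j with
  | nil => simp [exits] at h
  | cons c w ih =>
    by_cases hc : c = b ∧ j = 0
    · exact ⟨[], w, by simp [hc.1], by simp [ht, hc.2]⟩
    · simp only [exits, if_neg hc, zero_add] at h
      obtain ⟨s, t, rfl, hs⟩ := ih _ h
      exact ⟨c :: s, t, rfl, by simp [ht, hs]⟩

/-- Conservation of flow through the edge from `j` to `j + 1`: up-crossings minus down-crossings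
depend only on which side of the edge the path starts and ends. -/
lemma flow (w : Word) (j : ℤ) :
    (exits true j w : ℤ) - exits false (j + 1) w =
      (if j + 1 ≤ ht w then 1 else 0) - (if j + 1 ≤ 0 then 1 else 0) := by
  induction w generalizing j with
  | nil => simp [exits, ht]
  | cons c w ih =>
    have := ih (j - stp c)
    rw [show j - stp c + 1 = j + 1 - stp c by ring] at this
    cases c <;> simp only [exits, ht, stp] at this ⊢ <;> push_cast <;> simp at this ⊢ <;>
      split_ifs at this ⊢ <;> omega

/-! ### First-return loops -/

/-- A path at distance `j ≥ 1` from a level, on the side of `b`, that reaches the level has a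
shortest prefix reaching it. -/
lemma first_return (b : Bool) (w : Word) (j : ℤ) (hj : 1 ≤ j)
    (h : ∃ s t, w = s ++ t ∧ j + stp b * ht s = 0) :
    ∃ p q, w = p ++ q ∧ j + stp b * ht p = 0 ∧
      ∀ s t, p = s ++ t → t ≠ [] → 0 < j + stp b * ht s := by
  induction w generalizing j with
  | nil =>
    obtain ⟨s, t, hst, h⟩ := h
    obtain ⟨rfl, rfl⟩ := List.nil_eq_append_iff.1 hst
    simp [ht] at h; omega
  | cons c w ih =>
    obtain ⟨s, t, hst, h⟩ := h
    cases s with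
    | nil => simp [ht] at h; omega
    | cons d s =>
      obtain ⟨rfl, rfl⟩ := List.cons_eq_cons.1 hst
      by_cases h0 : j + stp b * stp c = 0
      · refine ⟨[c], s ++ t, rfl, by simpa [ht] using h0, ?_⟩
        intro s' t' hs' ht'
        cases s' with
        | nil => simp [ht]; omega
        | cons e s' =>
          simp at hs'
          exact absurd hs'.2.2 ht'
      · have hj' : 1 ≤ j + stp b * stp c := by
          cases b <;> cases c <;> simp [stp] at h0 ⊢ <;> omega
        obtain ⟨p, q, hpq, hp, hall⟩ := ih _ hj' ⟨s, t, rfl, by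
          simp only [ht] at h; rw [← h]; ring⟩
        refine ⟨c :: p, q, by rw [hpq]; rfl, by simp only [ht]; rw [← hp]; ring, ?_⟩
        intro s' t' hs' ht'
        cases s' with
        | nil => simp [ht]; omega
        | cons e s' =>
          obtain ⟨rfl, rfl⟩ := List.cons_eq_cons.1 hs'
          have := hall s' t' rfl ht'
          simp only [ht]; rw [mul_add, ← add_assoc]; exact this

lemma prime_of_first_return (b : Bool) (p : Word) (hp : 1 + stp b * ht p = 0)
    (hall : ∀ s t, p = s ++ t → t ≠ [] → 0 < 1 + stp b * ht s) : IsPrimeWord (b :: p) := by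
  refine ⟨by simp, ?_, ?_⟩
  · rw [balanced_iff_ht]
    cases b <;> simp [ht, stp] at hp ⊢ <;> omega
  · rintro ⟨u, v, hu, hv, hbu, -, huv⟩
    cases u with
    | nil => exact hu rfl
    | cons c u =>
      obtain ⟨rfl, rfl⟩ := List.cons_eq_cons.1 huv
      have := hall u v rfl hv
      rw [balanced_iff_ht] at hbu
      cases b <;> simp [ht, stp] at hbu this <;> omega

lemma elev_first_return (b : Bool) (p : Word)
    (hall : ∀ s t, p = s ++ t → t ≠ [] → 0 < 1 + stp b * ht s)
    (k : ℕ) (h1 : 1 ≤ k) (h2 : k ≤ (b :: p).length - 1) : 0 < stp b * elev (b :: p) k := by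
  obtain ⟨k, rfl⟩ : ∃ m, k = m + 1 := ⟨k - 1, by omega⟩
  have := hall (p.take k) (p.drop k) (by simp) (by
    intro h; rw [List.drop_eq_nil_iff] at h; simp at h2; omega)
  rw [elev_eq_ht]
  cases b <;> simp [ht, stp] at this ⊢ <;> omega

lemma upper_of_first_return (p : Word) (hp : 1 + stp true * ht p = 0)
    (hall : ∀ s t, p = s ++ t → t ≠ [] → 0 < 1 + stp true * ht s) : UpperPrime (true :: p) :=
  ⟨prime_of_first_return _ p hp hall, fun k h1 h2 => by
    have := elev_first_return _ p hall k h1 h2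
    simpa [stp] using this⟩

lemma lower_of_first_return (p : Word) (hp : 1 + stp false * ht p = 0)
    (hall : ∀ s t, p = s ++ t → t ≠ [] → 0 < 1 + stp false * ht s) : LowerPrime (false :: p) :=
  ⟨prime_of_first_return _ p hp hall, fun k h1 h2 => by
    have := elev_first_return _ p hall k h1 h2
    simpa [stp] using this⟩

/-- An upper prime starts with `R`. -/
lemma UpperPrime.head {U : Word} (h : UpperPrime U) : ∃ V, U = true :: V := by
  obtain ⟨⟨hne, hb, -⟩, hpos⟩ := h
  rw [balanced_iff_ht] at hb
  match U with
  | [] => exact absurd rfl hne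
  | [c] => cases c <;> simp [ht, stp] at hb
  | c :: d :: V =>
    have := hpos 1 le_rfl (by simp)
    rw [elev_eq_ht] at this
    cases c
    · simp [ht, stp] at this
    · exact ⟨_, rfl⟩

/-- A lower prime starts with `L`. -/
lemma LowerPrime.head {D : Word} (h : LowerPrime D) : ∃ V, D = false :: V := by
  obtain ⟨⟨hne, hb, -⟩, hneg⟩ := h
  rw [balanced_iff_ht] at hb
  match D with
  | [] => exact absurd rfl hne
  | [c] => cases c <;> simp [ht, stp] at hb
  | c :: d :: V =>
    have := hneg 1 le_rfl (by simp)
    rw [elev_eq_ht] at this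
    cases c
    · exact ⟨_, rfl⟩
    · simp [ht, stp] at this

/-! ### Reduced words are determined by their exit numbers -/

lemma Reduced.of_append {u v : Word} (h : Reduced (u ++ v)) : Reduced v := by
  rintro ⟨U, D, W₁, W₂, hU, hD, rfl⟩
  exact h ⟨U, D, u ++ W₁, W₂, hU, hD, by simp⟩

/-- A reduced word starting with `R` that exits `0` downwards does so only once, and ends
below `0`: after its first downward exit it never returns to `0`, as the return would complete a
lower prime directly after an upper prime. -/
lemma reduced_up_start (n : ℕ) (B : Word) (hn : B.length ≤ n) (hr : Reduced (true :: B))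
    (h : 0 < exits false 0 (true :: B)) :
    ht (true :: B) < 0 ∧ exits false 0 (true :: B) = 1 := by
  induction n generalizing B with
  | zero =>
    obtain rfl : B = [] := List.length_eq_zero_iff.1 (by omega)
    simp [exits] at h
  | succ n ih =>
    have h' : 0 < exits false (-1) B := by simpa [exits, stp] using h
    obtain ⟨s, t, hst, hs⟩ := exists_of_exits_pos _ _ _ h'
    obtain ⟨p, V, rfl, hp, hall⟩ := first_return true B 1 le_rfl
      ⟨s, false :: t, hst, by simp [stp, hs]⟩
    have hU := upper_of_first_return p hp hall
    -- the first loop of the path stays above `0`, so contributes no downward exit from `0`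
    have hp0 : exits false 0 (true :: p) = 0 := by
      by_contra hne
      have : 0 < exits false (-1) p := by
        have := Nat.pos_of_ne_zero hne
        simpa [exits, stp] using this
      obtain ⟨s, t, hst, hs⟩ := exists_of_exits_pos _ _ _ this
      have := hall s _ hst (by simp)
      simp [stp, hs] at this
    have hhp : ht (true :: p) = 0 := by simpa [ht, stp] using hp
    rw [← List.cons_append] at h hr ⊢
    rw [exits_append, hp0, hhp] at h ⊢
    rw [ht_append, hhp]
    simp only [sub_zero, zero_add] at h ⊢
    match V, h, hr, hn with
    | [], h, _, _ => simp [exits] at h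
    | true :: V, h, hr, hn =>
      exact ih V (by simp at hn; omega) hr.of_append h
    | false :: V, h, hr, hn =>
      have hf := flow (false :: V) (-1)
      have h0 : exits true (-1) (false :: V) = 0 := by
        by_contra hne
        obtain ⟨s, t, hst, hs⟩ := exists_of_exits_pos _ _ _ (Nat.pos_of_ne_zero hne)
        cases s with
        | nil => simp at hst
        | cons c s =>
          obtain ⟨rfl, rfl⟩ := List.cons_eq_cons.1 hst
          obtain ⟨p', q', hpq, hp', hall'⟩ := first_return false (s ++ true :: t) 1 le_rfl
            ⟨s ++ [true], t, by simp, by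
              rw [ht_append]; simp [ht, stp] at hs ⊢; omega⟩
          exact hr ⟨_, _, [], q', hU, lower_of_first_return p' hp' hall', by simp [hpq]⟩
      rw [h0] at hf
      simp only [show (-1 : ℤ) + 1 = 0 by norm_num] at hf
      split_ifs at hf <;> constructor <;> omega

/-- A word starting with `L` that exits `0` upwards and ends below `0` exits `0` downwards at
least twice. -/
lemma down_start (A : Word) (h : 0 < exits true 0 (false :: A)) (hh : ht (false :: A) < 0) :
    2 ≤ exits false 0 (false :: A) := by
  have h' : 0 < exits true 1 A := by simpa [exits, stp] using h
  obtain ⟨s, t, rfl, hs⟩ := exists_of_exits_pos _ _ _ h'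
  -- the prefix `L s` is a loop at `0`; the rest ends below `0` and so exits `0` downwards again
  have hf := flow (true :: t) (-1)
  rw [← List.cons_append, ht_append] at hh
  have h0 : ht (false :: s) = 0 := by simp [ht, stp, hs]
  rw [h0] at hh
  rw [← List.cons_append, exits_append, h0]
  have h1 : 1 ≤ exits false 0 (false :: s) := by simp [exits]
  simp only [show (-1 : ℤ) + 1 = 0 by norm_num, sub_zero] at hf ⊢
  split_ifs at hf <;> omega

lemma reduced_unique_aux (A B : Word) (hB : Reduced (true :: B))
    (hh : ht (false :: A) = ht (true :: B))
    (he : ∀ b j, exits b j (false :: A) = exits b j (true :: B)) : False := by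
  have h1 : 0 < exits false 0 (true :: B) := by rw [← he]; simp [exits]
  have h2 : 0 < exits true 0 (false :: A) := by rw [he]; simp [exits]
  obtain ⟨h3, h4⟩ := reduced_up_start _ B le_rfl hB h1
  have := down_start A h2 (by omega)
  rw [he] at this
  omega

theorem reduced_unique (X Y : Word) (hX : Reduced X) (hY : Reduced Y) (hh : ht X = ht Y)
    (he : ∀ b j, exits b j X = exits b j Y) : X = Y := by
  induction X generalizing Y with
  | nil =>
    cases Y with
    | nil => rfl
    | cons c Y => have := he c 0; simp [exits] at this; omega
  | cons c X ih =>
    cases Y with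
    | nil => have := he c 0; simp [exits] at this
    | cons d Y =>
      have key : c = d := by
        cases c <;> cases d
        · rfl
        · exact (reduced_unique_aux X Y hY hh he).elim
        · exact (reduced_unique_aux Y X hX hh.symm fun b j => (he b j).symm).elim
        · rfl
      subst key
      congr 1
      refine ih Y (Reduced.of_append (u := [c]) hX) (Reduced.of_append (u := [c]) hY) ?_ ?_
      · simpa [ht] using hh
      · intro b j
        have := he b (j + stp c)
        simpa [exits] using this

/-! ### The invariant of the equivalence relation -/

/-- The congruence on the free monoid identifying words with equal length, final height and exit
numbers. -/
def sameData : Con (FreeMonoid Bool) where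
  r X Y := X.toList.length = Y.toList.length ∧ ht X.toList = ht Y.toList ∧
    ∀ b j, exits b j X.toList = exits b j Y.toList
  iseqv := ⟨fun _ => ⟨rfl, rfl, fun _ _ => rfl⟩,
    fun h => ⟨h.1.symm, h.2.1.symm, fun b j => (h.2.2 b j).symm⟩,
    fun h k => ⟨h.1.trans k.1, h.2.1.trans k.2.1, fun b j => (h.2.2 b j).trans (k.2.2 b j)⟩⟩
  mul' := by
    rintro w x y z ⟨h1, h2, h3⟩ ⟨k1, k2, k3⟩
    refine ⟨by simp [h1, k1], ?_, ?_⟩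
    · simp [ht_append, h2, k2]
    · intro b j
      simp [exits_append, h2, h3, k3]

/-- The algebra map from the free algebra to the monoid algebra of the quotient by `sameData`. -/
noncomputable def toQuot : FreeAlgebra ℂ Bool →ₐ[ℂ] MonoidAlgebra ℂ sameData.Quotient :=
  FreeAlgebra.lift ℂ fun b => MonoidAlgebra.of ℂ _ (sameData.mk' (FreeMonoid.of b))

lemma toQuot_toA (w : Word) :
    toQuot (toA w) = MonoidAlgebra.of ℂ _ (sameData.mk' (FreeMonoid.ofList w)) := by
  induction w with
  | nil =>
    rw [FreeMonoid.ofList_nil, map_one, map_one]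
    simp [toA]
  | cons c w ih =>
    have h1 : toA (c :: w) = FreeAlgebra.ι ℂ c * toA w := by simp [toA]
    rw [h1, map_mul, ih, FreeMonoid.ofList_cons, map_mul, map_mul]
    simp [toQuot]

lemma toA_append (u v : Word) : toA (u ++ v) = toA u * toA v := by
  simp [toA]

lemma Jideal_le_ker : Jideal ≤ TwoSidedIdeal.ker toQuot := by
  rw [Jideal, TwoSidedIdeal.span_le]
  rintro x ⟨F, G, -, -, hF, hG, rfl⟩
  rw [balanced_iff_ht] at hF hG
  rw [SetLike.mem_coe, TwoSidedIdeal.mem_ker, map_sub, sub_eq_zero, ← toA_append, ← toA_append,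
    toQuot_toA, toQuot_toA]
  congr 1
  refine (Con.eq _).2 ⟨?_, ?_, ?_⟩
  · simp [add_comm]
  · simp [ht_append, add_comm]
  · intro b j
    simp [exits_append, hF, hG, add_comm]

lemma sameData_of_wequiv {X Y : Word} (h : WEquiv X Y) :
    X.length = Y.length ∧ ht X = ht Y ∧ ∀ b j, exits b j X = exits b j Y := by
  have h1 := Jideal_le_ker h
  rw [TwoSidedIdeal.mem_ker, map_sub, sub_eq_zero, toQuot_toA, toQuot_toA] at h1
  exact (Con.eq sameData).1 (MonoidAlgebra.of_injective h1)

lemma WEquiv.symm {X Y : Word} (h : WEquiv X Y) : WEquiv Y X := by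
  have := Jideal.neg_mem h
  rwa [neg_sub] at this

lemma WEquiv.trans {X Y Z : Word} (h : WEquiv X Y) (k : WEquiv Y Z) : WEquiv X Z := by
  have := Jideal.add_mem h k
  rwa [sub_add_sub_cancel] at this

lemma wequiv_swap (U D W₁ W₂ : Word) (hU : IsPrimeWord U) (hD : IsPrimeWord D) :
    WEquiv (W₁ ++ D ++ U ++ W₂) (W₁ ++ U ++ D ++ W₂) := by
  have h1 : toA D * toA U - toA U * toA D ∈ Jideal :=
    TwoSidedIdeal.subset_span ⟨D, U, hD.1, hU.1, hD.2.1, hU.2.1, rfl⟩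
  have h2 := Jideal.mul_mem_right _ (toA W₂) (Jideal.mul_mem_left (toA W₁) _ h1)
  have h3 : toA (W₁ ++ D ++ U ++ W₂) - toA (W₁ ++ U ++ D ++ W₂) =
      toA W₁ * (toA D * toA U - toA U * toA D) * toA W₂ := by
    simp only [toA_append]; noncomm_ring
  rw [WEquiv, h3]
  exact h2

/-! ### Minimal words -/

/-- Every class has a lexicographically least word, and that word is reduced. -/
lemma exists_min_reduced (X : Word) :
    ∃ Y, Reduced Y ∧ WEquiv Y X ∧ ∀ Z, WEquiv Z X → Y = Z ∨ WordLt Y Z := by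
  have hfin : {Y : Word | WEquiv Y X}.Finite :=
    (List.finite_length_eq Bool X.length).subset fun Y hY => (sameData_of_wequiv hY).1
  have hXX : WEquiv X X := by rw [WEquiv, sub_self]; exact Jideal.zero_mem
  obtain ⟨Y, hY, hmin⟩ := Set.exists_min_image _ (id : Word → Word) hfin ⟨X, hXX⟩
  refine ⟨Y, ?_, hY, fun Z hZ => (hmin Z hZ).eq_or_lt⟩
  rintro ⟨U, D, W₁, W₂, hU, hD, rfl⟩
  have hle := hmin _ ((wequiv_swap U D W₁ W₂ hU.1 hD.1).trans hY)
  obtain ⟨U', rfl⟩ := hU.head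
  obtain ⟨D', rfl⟩ := hD.head
  refine absurd hle (not_le.2 ?_)
  simp only [id, List.append_assoc, List.cons_append]
  exact List.Lex.append_left _ (List.Lex.rel (by decide)) W₁

/-- every equivalence class of balanced words contains a unique
reduced word, and this reduced word is the minimal word of the class in
alphabetical order. -/
theorem stmt19 (X : Word) (hX : BalancedWord X) :
    (∃! Y : Word, Reduced Y ∧ WEquiv Y X) ∧
      ∀ Y : Word, Reduced Y → WEquiv Y X →
        ∀ Z : Word, WEquiv Z X → Y = Z ∨ WordLt Y Z := by
  obtain ⟨Y₀, hr, he, hmin⟩ := exists_min_reduced X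
  have huniq : ∀ Y, Reduced Y → WEquiv Y X → Y = Y₀ := fun Y h1 h2 =>
    have h := sameData_of_wequiv (h2.trans he.symm)
    reduced_unique Y Y₀ h1 hr h.2.1 h.2.2
  refine ⟨⟨Y₀, ⟨hr, he⟩, fun Y h => huniq Y h.1 h.2⟩, ?_⟩
  intro Y h1 h2
  rw [huniq Y h1 h2]
  exact hmin
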